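/- arXiv:math/0104011 — 2 statements merged into one kernel-verified Lean document; each statement's English description precedes it below -/
import Mathlib

section
/- Let m ≥ 1 and define t : ℤ → ℤ by t(n) = T(m,n) for n ≥ 1 and t(n) = M(G(m,n)) (the signed number of matchings of the signed graph G(m,n) = G(m,−|n|)) for n ≤ 0. Then there exist integers c_0, …, c_{2^m − 1} such that t(n + 2^m) = ∑_{j=0}^{2^m − 1} c_j · t(n+j) for every n ∈ ℤ. (The doubly-infinite sequence of ordinary and signed matching counts satisfies a single constant-coefficient linear recurrence of order 2^m.) -/
open Finset

/-- The m-by-n grid graph on `Fin m × Fin n`: vertices are adjacent iff they agree in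
one coordinate and differ by exactly 1 in the other. -/
def grid (m n : ℕ) : SimpleGraph (Fin m × Fin n) :=
  SimpleGraph.fromRel (fun p q =>
    (p.1 = q.1 ∧ (p.2 : ℕ) + 1 = q.2) ∨ (p.2 = q.2 ∧ (p.1 : ℕ) + 1 = q.1))

/-- A perfect matching: a set of edges of `G` such that every vertex belongs to
exactly one edge of the set. -/
def IsPM {V : Type*} (G : SimpleGraph V) (P : Finset (Sym2 V)) : Prop :=
  (∀ e ∈ P, e ∈ G.edgeSet) ∧ ∀ v : V, ∃! e, e ∈ P ∧ v ∈ e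

/-- `T m n` is the number of perfect matchings of the m-by-n grid graph. -/
noncomputable def T (m n : ℕ) : ℕ :=
  {P : Finset (Sym2 (Fin m × Fin n)) | IsPM (grid m n) P}.ncard

open scoped Classical in
/-- The finset of all perfect matchings of a graph on a finite vertex type. -/
noncomputable def pmFinset {V : Type*} [Fintype V] [DecidableEq V]
    (G : SimpleGraph V) : Finset (Finset (Sym2 V)) :=
  Finset.univ.filter (fun P => IsPM G P)

open scoped Classical in
/-- The number of vertical edges in `P` (edges whose endpoints differ in the
first, i.e. row, coordinate). -/
noncomputable def vert {m n : ℕ} (P : Finset (Sym2 (Fin m × Fin n))) : ℕ :=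
  (P.filter (fun e => ∃ p q : Fin m × Fin n, e = s(p, q) ∧ p.1 ≠ q.1)).card

/-- The underlying graph of the signed graph `G(m,-k)`: all horizontal edges, and
vertical edges only in columns 1 through k (0-indexed). -/
def negGrid (m k : ℕ) : SimpleGraph (Fin m × Fin (k + 2)) :=
  SimpleGraph.fromRel (fun p q =>
    (p.1 = q.1 ∧ (p.2 : ℕ) + 1 = q.2) ∨
    (p.2 = q.2 ∧ (p.1 : ℕ) + 1 = q.1 ∧ 1 ≤ (p.2 : ℕ) ∧ (p.2 : ℕ) ≤ k))

/-- The signed number of matchings `M(G(m,-k))`: every vertical edge has weight -1,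
every horizontal edge weight +1. -/
noncomputable def Msigned (m k : ℕ) : ℤ :=
  ∑ P ∈ pmFinset (negGrid m k), (-1 : ℤ) ^ vert P

/-! Let `M x` be the transfer matrix of a column of height `m`, in which a vertical edge has weight
`x`, and let `J = M 0`, the permutation matrix of complementation. A matching of a column weighted
by `(x + y) ^ (number of edges)` is a matching split into two disjoint parts weighted by `x` and
`y`. The vertices that the first part leaves uncovered are the complement of those that the second
part must avoid, so `M x * J * M y = M (x + y)`. In particular `M 1` is invertible, with inverse
`J * M (-1) * J`. Since `J * J = 1`, the power `(M 1) ^ (-k)` is `J * (M (-1)) ^ k * J`, where the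
two outer factors are the transfer matrices of columns without vertical edges; its corner entry is
therefore the signed count of `G(m,-k)`. So `t n` is the corner entry of `(M 1) ^ n` for every
integer `n`, and the recurrence is Cayley–Hamilton. -/

lemma card_filter_eq_ite_exists {α : Type*} [Fintype α] {p : α → Prop} [DecidablePred p]
    [Decidable (∃ a, p a)] (unique : ∀ a b, p a → p b → a = b) :
    #{a | p a} = if ∃ a, p a then 1 else 0 := by
  split_ifs with h
  · obtain ⟨a, ha⟩ := h
    exact card_eq_one.2 ⟨a, by grind⟩
  · simpa [filter_eq_empty_iff] using h

lemma sum_add_pow_card_eq_sum_disjoint {α R : Type*} [Fintype α] [DecidableEq α] [CommSemiring R]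
    (p : Finset α → Prop) [DecidablePred p] (x y : R) :
    ∑ U with p U, (x + y) ^ #U =
      ∑ z : Finset α × Finset α with Disjoint z.1 z.2 ∧ p (z.1 ∪ z.2), x ^ #z.1 * y ^ #z.2 := by
  simp_rw [← sum_pow_mul_eq_add_pow x y, sum_sigma']
  refine sum_nbij' (fun U ↦ (U.2, U.1 \ U.2)) (fun z ↦ ⟨z.1 ∪ z.2, z.1⟩) ?_ ?_ ?_ ?_ ?_
  · rintro ⟨U, P⟩ h
    simp only [mem_sigma, mem_filter, mem_univ, true_and, mem_powerset] at h ⊢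
    exact ⟨disjoint_sdiff, by rw [union_sdiff_of_subset h.2]; exact h.1⟩
  · rintro ⟨P, Q⟩ h
    simp only [mem_sigma, mem_filter, mem_univ, true_and, mem_powerset] at h ⊢
    exact ⟨h.2, subset_union_left⟩
  · rintro ⟨U, P⟩ h
    simp only [mem_sigma, mem_filter, mem_univ, true_and, mem_powerset] at h
    simp [union_sdiff_of_subset h.2]
  · rintro ⟨P, Q⟩ h
    simp only [mem_filter, mem_univ, true_and] at h
    simp [union_sdiff_cancel_left h.1]
  · rintro ⟨U, P⟩ h
    simp only [mem_sigma, mem_filter, mem_univ, true_and, mem_powerset] at h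
    rw [card_sdiff_of_subset h.2]

section Matrix

variable {S R : Type*} [Fintype S] [DecidableEq S]

lemma matrix_prod_ofFn_apply_eq_sum_paths [CommSemiring R] {n : ℕ} (M : Fin n → Matrix S S R)
    (a b : S) :
    (List.ofFn M).prod a b = ∑ h : Fin (n + 1) → S with h 0 = a ∧ h (Fin.last n) = b,
      ∏ j, M j (h j.castSucc) (h j.succ) := by
  induction n generalizing a with
  | zero =>
    rw [sum_filter, ← (Equiv.funUnique (Fin 1) S).symm.sum_comp]
    simp [Matrix.one_apply, ite_and]
  | succ n ih =>
    rw [List.ofFn_succ, List.prod_cons, Matrix.mul_apply, sum_filter,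
      ← (Fin.consEquiv fun _ ↦ S).sum_comp, Fintype.sum_prod_type_right]
    simp_rw [ih, sum_filter, mul_sum]
    rw [sum_comm]
    refine sum_congr rfl fun g _ ↦ ?_
    simp [Fin.consEquiv, Fin.prod_univ_succ, ← Fin.succ_last, ite_and]

variable [CommRing R]

lemma matrix_zpow_add_card_apply {M : Matrix S S R} (hM : IsUnit M.det) (n : ℤ) (a b : S) :
    (M ^ (n + Fintype.card S)) a b =
      ∑ j ∈ range (Fintype.card S), -M.charpoly.coeff j * (M ^ (n + j)) a b := by
  nontriviality R
  have cayley_hamilton : M ^ Fintype.card S =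
      ∑ j ∈ range (Fintype.card S), -M.charpoly.coeff j • M ^ j := by
    have h := M.aeval_self_charpoly
    have leading : M.charpoly.coeff (Fintype.card S) = 1 := by
      simpa [Polynomial.Monic, Polynomial.leadingCoeff] using M.charpoly_monic
    rw [Polynomial.aeval_eq_sum_range, M.charpoly_natDegree_eq_dim, sum_range_succ, leading,
      one_smul] at h
    simpa using eq_neg_of_add_eq_zero_right h
  simp_rw [Matrix.zpow_add hM, zpow_natCast, cayley_hamilton, mul_sum, Matrix.sum_apply,
    Matrix.mul_smul, Matrix.smul_apply, smul_eq_mul]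

end Matrix

section Transfer

variable {V : Type*} [Fintype V] [DecidableEq V]

/-- The number of edges of the edge set `P` at the vertex `v`, counted by their other endpoint. -/
def edgeDegree (P : Finset (Sym2 V)) (v : V) : ℕ := #{w | s(v, w) ∈ P}

lemma edgeDegree_union {P Q : Finset (Sym2 V)} (h : Disjoint P Q) (v : V) :
    edgeDegree (P ∪ Q) v = edgeDegree P v + edgeDegree Q v := by
  simp_rw [edgeDegree, mem_union, filter_or]
  refine card_union_of_disjoint (disjoint_filter.2 fun w _ hP hQ ↦ ?_)
  exact disjoint_left.1 h hP hQ

lemma edgeDegree_pos {P : Finset (Sym2 V)} {v w : V} (h : s(v, w) ∈ P) : 0 < edgeDegree P v :=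
  card_pos.2 ⟨w, by simpa using h⟩

lemma edgeDegree_eq_one_iff {P : Finset (Sym2 V)} {v : V} :
    edgeDegree P v = 1 ↔ ∃! e, e ∈ P ∧ v ∈ e := by
  rw [edgeDegree, card_eq_one_iff_existsUnique]
  simp only [mem_filter_univ]
  constructor
  · rintro ⟨w, hw, unique⟩
    refine ⟨s(v, w), ⟨hw, Sym2.mem_mk_left v w⟩, ?_⟩
    rintro e ⟨he, hv⟩
    obtain ⟨w', rfl⟩ := Sym2.mem_iff_exists.1 hv
    rw [unique w' he]
  · rintro ⟨e, ⟨he, hv⟩, unique⟩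
    obtain ⟨w, rfl⟩ := Sym2.mem_iff_exists.1 hv
    exact ⟨w, he, fun w' hw' ↦ Sym2.congr_right.1 (unique _ ⟨hw', Sym2.mem_mk_left v w'⟩)⟩

/-- `P` is a matching of the layer `H` that leaves out precisely the vertices of `A`, which are
matched to the previous layer, and those of `B`, which are matched to the next one. The counting
form also says that `A` and `B` are disjoint. -/
def IsLayerMatching (H : SimpleGraph V) (A B : Finset V) (P : Finset (Sym2 V)) : Prop :=
  (∀ e ∈ P, e ∈ H.edgeSet) ∧
    ∀ v, (if v ∈ A then 1 else 0) + (if v ∈ B then 1 else 0) + edgeDegree P v = 1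

namespace IsLayerMatching

variable {H : SimpleGraph V} {A B X Y : Finset V} {P Q : Finset (Sym2 V)}

lemma empty_iff : IsLayerMatching H A B ∅ ↔ A = Bᶜ := by
  simp only [IsLayerMatching, edgeDegree, Finset.ext_iff, mem_compl, notMem_empty,
    IsEmpty.forall_iff, implies_true, filter_false, card_empty, add_zero, true_and]
  grind

lemma right_unique (hX : IsLayerMatching H A X P) (hY : IsLayerMatching H A Y P) : X = Y := by
  ext v
  have := hX.2 v
  have := hY.2 v
  grind

lemma disjoint_union (hP : IsLayerMatching H A Xᶜ P) (hQ : IsLayerMatching H X B Q) :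
    Disjoint P Q ∧ IsLayerMatching H A B (P ∪ Q) := by
  have degree_add (v : V) : (if v ∈ A then 1 else 0) + (if v ∈ B then 1 else 0) +
      (edgeDegree P v + edgeDegree Q v) = 1 := by
    have := hP.2 v
    have := hQ.2 v
    simp only [mem_compl] at *
    grind
  have disjoint : Disjoint P Q := by
    refine disjoint_left.2 fun e ↦ ?_
    induction e with
    | _ v w =>
      intro heP heQ
      have := edgeDegree_pos heP
      have := edgeDegree_pos heQ
      have := degree_add v
      omega
  refine ⟨disjoint, fun e he ↦ (mem_union.1 he).elim (hP.1 e) (hQ.1 e), fun v ↦ ?_⟩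
  rw [edgeDegree_union disjoint]
  exact degree_add v

lemma exists_split (hPQ : Disjoint P Q) (h : IsLayerMatching H A B (P ∪ Q)) :
    ∃ X, IsLayerMatching H A Xᶜ P ∧ IsLayerMatching H X B Q := by
  refine ⟨univ.filter fun v ↦ v ∈ A ∨ 0 < edgeDegree P v,
    ⟨fun e he ↦ h.1 e (mem_union_left _ he), fun v ↦ ?_⟩,
    ⟨fun e he ↦ h.1 e (mem_union_right _ he), fun v ↦ ?_⟩⟩ <;>
  · have := h.2 v
    rw [edgeDegree_union hPQ] at this
    simp only [mem_compl, mem_filter_univ]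
    grind

end IsLayerMatching

open scoped Classical in
/-- The transfer matrix of a layer `H`: its entry at `A`, `B` is the generating function, by number
of edges, of the matchings of `H` that avoid precisely `A` and `B`. -/
noncomputable def transfer {R : Type*} [CommSemiring R] (H : SimpleGraph V) (x : R) :
    Matrix (Finset V) (Finset V) R :=
  fun A B ↦ ∑ P with IsLayerMatching H A B P, x ^ #P

section CommSemiring

variable {R : Type*} [CommSemiring R] (H : SimpleGraph V) (x y : R)

lemma transfer_zero_apply (A B : Finset V) :
    transfer H (0 : R) A B = if A = Bᶜ then 1 else 0 := by
  classical
  rw [transfer, sum_filter, sum_eq_single ∅] <;>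
    simp +contextual [IsLayerMatching.empty_iff]

lemma transfer_bot : transfer (⊥ : SimpleGraph V) x = transfer H 0 := by
  classical
  ext A B
  rw [transfer_zero_apply, transfer, sum_filter, sum_eq_single ∅]
  · simp [IsLayerMatching.empty_iff]
  · refine fun P _ hP ↦ if_neg fun h ↦ hP (eq_empty_of_forall_notMem fun e he ↦ ?_)
    simpa using h.1 e he
  · simp

lemma transfer_mul_transfer_zero_mul_transfer :
    transfer H x * transfer H 0 * transfer H y = transfer H (x + y) := by
  classical
  ext A B
  have split_unique (z : Finset (Sym2 V) × Finset (Sym2 V)) :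
      #{X | IsLayerMatching H A Xᶜ z.1 ∧ IsLayerMatching H X B z.2} =
        if Disjoint z.1 z.2 ∧ IsLayerMatching H A B (z.1 ∪ z.2) then 1 else 0 := by
    rw [card_filter_eq_ite_exists fun X Y hX hY ↦ compl_injective (hX.1.right_unique hY.1)]
    exact if_congr ⟨fun ⟨X, hP, hQ⟩ ↦ hP.disjoint_union hQ,
      fun h ↦ IsLayerMatching.exists_split h.1 h.2⟩ rfl rfl
  calc (transfer H x * transfer H 0 * transfer H y : Matrix _ _ R) A B
      = ∑ X, transfer H x A Xᶜ * transfer H y X B := by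
        simp [Matrix.mul_apply, transfer_zero_apply]
    _ = ∑ X, ∑ z : Finset (Sym2 V) × Finset (Sym2 V),
          if IsLayerMatching H A Xᶜ z.1 ∧ IsLayerMatching H X B z.2
          then x ^ #z.1 * y ^ #z.2 else 0 := by
        simp_rw [transfer, sum_filter, sum_mul_sum, ite_zero_mul_ite_zero, Fintype.sum_prod_type]
    _ = ∑ z : Finset (Sym2 V) × Finset (Sym2 V) with
          Disjoint z.1 z.2 ∧ IsLayerMatching H A B (z.1 ∪ z.2), x ^ #z.1 * y ^ #z.2 := by
        rw [sum_comm, sum_filter]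
        refine sum_congr rfl fun z _ ↦ ?_
        rw [← sum_filter, sum_const, split_unique]
        simp
    _ = transfer H (x + y) A B := (sum_add_pow_card_eq_sum_disjoint _ x y).symm

lemma transfer_zero_mul_self : transfer H (0 : R) * transfer H 0 = 1 := by
  ext A B
  simp [Matrix.mul_apply, transfer_zero_apply, Matrix.one_apply]

end CommSemiring

variable {R : Type*} [CommRing R] (H : SimpleGraph V) (x : R)

lemma transfer_mul_conj_transfer_neg :
    transfer H x * (transfer H 0 * transfer H (-x) * transfer H 0) = 1 := by
  rw [← mul_assoc, ← mul_assoc, transfer_mul_transfer_zero_mul_transfer, add_neg_cancel,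
    transfer_zero_mul_self]

lemma isUnit_det_transfer : IsUnit (transfer H x).det :=
  Matrix.isUnit_det_of_right_inverse (transfer_mul_conj_transfer_neg H x)

lemma transfer_zpow_neg (k : ℕ) :
    transfer H x ^ (-k : ℤ) = transfer H 0 * transfer H (-x) ^ k * transfer H 0 := by
  let J : (Matrix (Finset V) (Finset V) R)ˣ :=
    ⟨transfer H 0, transfer H 0, transfer_zero_mul_self H, transfer_zero_mul_self H⟩
  rw [Matrix.zpow_neg (isUnit_det_transfer H x), zpow_natCast, ← Matrix.inv_pow',
    Matrix.inv_eq_right_inv (transfer_mul_conj_transfer_neg H x)]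
  exact J.conj_pow _ k

end Transfer

section Layered

variable {V : Type*} {n : ℕ}

lemma mem_pmFinset [Fintype V] [DecidableEq V] {G : SimpleGraph V} {P : Finset (Sym2 V)} :
    P ∈ pmFinset G ↔ IsPM G P := by
  simp [pmFinset]

/-- The graph with vertex set `V × Fin n` obtained from the graphs `H 0, …, H (n - 1)` on `V`,
placed side by side as layers, by joining every vertex to its copies in the adjacent layers. -/
def layered (H : Fin n → SimpleGraph V) : SimpleGraph (V × Fin n) where
  Adj p q := (p.2 = q.2 ∧ (H p.2).Adj p.1 q.1) ∨
    (p.1 = q.1 ∧ ((p.2 : ℕ) + 1 = q.2 ∨ (q.2 : ℕ) + 1 = p.2))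
  symm := ⟨fun p q h ↦ by
    rcases h with ⟨hj, h⟩ | h
    · exact .inl ⟨hj.symm, hj ▸ h.symm⟩
    · exact .inr ⟨h.1.symm, h.2.symm⟩⟩
  loopless := ⟨fun p h ↦ by simp at h⟩

variable [Fintype V] [DecidableEq V]

/-- The edges of `P` inside the layer `j`. -/
def layerEdges (P : Finset (Sym2 (V × Fin n))) (j : Fin n) : Finset (Sym2 V) :=
  {e | e.map (·, j) ∈ P}

/-- The vertices of `V` whose copies in the layers `k - 1` and `k` are joined by an edge of `P`.
It is empty for `k = 0` and `k = n`, where one of the two layers does not exist. -/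
def crossing (P : Finset (Sym2 (V × Fin n))) (k : Fin (n + 1)) : Finset V :=
  {v | ∃ i j : Fin n, (i : ℕ) + 1 = k ∧ (j : ℕ) = k ∧ s((v, i), (v, j)) ∈ P}

/-- The edge set on `V × Fin n` with edges `L j` inside the layer `j` and crossing `C k` between
the layers `k - 1` and `k`. -/
def assemble (C : Fin (n + 1) → Finset V) (L : Fin n → Finset (Sym2 V)) :
    Finset (Sym2 (V × Fin n)) :=
  {e | (∃ j, ∃ f ∈ L j, f.map (·, j) = e) ∨
    ∃ i j : Fin n, (i : ℕ) + 1 = j ∧ ∃ v ∈ C j.castSucc, s((v, i), (v, j)) = e}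

variable {H : Fin n → SimpleGraph V} {P : Finset (Sym2 (V × Fin n))}
  {C : Fin (n + 1) → Finset V} {L : Fin n → Finset (Sym2 V)}

lemma mem_layerEdges {j : Fin n} {v w : V} :
    s(v, w) ∈ layerEdges P j ↔ s((v, j), (w, j)) ∈ P := by
  simp [layerEdges]

lemma mem_crossing_castSucc {j : Fin n} {v : V} :
    v ∈ crossing P j.castSucc ↔ ∃ i : Fin n, (i : ℕ) + 1 = j ∧ s((v, i), (v, j)) ∈ P := by
  simp only [crossing, mem_filter_univ, Fin.val_castSucc]
  constructor
  · rintro ⟨i, j', hi, hj, h⟩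
    obtain rfl : j' = j := Fin.ext hj
    exact ⟨i, hi, h⟩
  · rintro ⟨i, hi, h⟩
    exact ⟨i, j, hi, rfl, h⟩

lemma mem_crossing_succ {i : Fin n} {v : V} :
    v ∈ crossing P i.succ ↔ ∃ j : Fin n, (i : ℕ) + 1 = j ∧ s((v, i), (v, j)) ∈ P := by
  simp only [crossing, mem_filter_univ, Fin.val_succ]
  constructor
  · rintro ⟨i', j, hi, hj, h⟩
    obtain rfl : i' = i := Fin.ext (Nat.succ_injective hi)
    exact ⟨j, hj.symm, h⟩
  · rintro ⟨j, hj, h⟩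
    exact ⟨i, j, rfl, hj.symm, h⟩

lemma crossing_zero : crossing P 0 = ∅ := by
  simp [crossing]

lemma crossing_last : crossing P (Fin.last n) = ∅ := by
  simp only [crossing, Fin.val_last]
  grind

lemma mem_assemble {p q : V × Fin n} :
    s(p, q) ∈ assemble C L ↔ (p.2 = q.2 ∧ s(p.1, q.1) ∈ L p.2) ∨
      (p.1 = q.1 ∧ (((p.2 : ℕ) + 1 = q.2 ∧ p.1 ∈ C q.2.castSucc) ∨
        ((q.2 : ℕ) + 1 = p.2 ∧ p.1 ∈ C p.2.castSucc))) := by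
  obtain ⟨v, i⟩ := p
  obtain ⟨w, j⟩ := q
  simp only [assemble, mem_filter_univ]
  constructor
  · rintro (⟨k, f, hf, h⟩ | ⟨k, l, hkl, u, hu, h⟩)
    · induction f with
      | _ a b => grind [Sym2.map_mk, Sym2.eq_iff, Sym2.eq_swap]
    · grind [Sym2.eq_iff]
  · rintro (⟨h, hL⟩ | ⟨h, ⟨hij, hC⟩ | ⟨hij, hC⟩⟩) <;> obtain rfl := h
    · exact .inl ⟨i, _, hL, rfl⟩
    · exact .inr ⟨i, j, hij, v, hC, rfl⟩
    · exact .inr ⟨j, i, hij, v, hC, Sym2.eq_swap⟩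

lemma layerEdges_assemble : layerEdges (assemble C L) = L := by
  ext j e
  induction e with
  | _ v w => simp [mem_layerEdges, mem_assemble]

lemma crossing_assemble (zero : C 0 = ∅) (last : C (Fin.last n) = ∅) :
    crossing (assemble C L) = C := by
  ext k v
  simp only [crossing, mem_filter_univ, mem_assemble]
  constructor
  · rintro ⟨i, j, hi, hj, h⟩
    obtain rfl : j.castSucc = k := Fin.ext hj
    grind
  · intro hv
    have hk : k ≠ 0 := by rintro rfl; simp [zero] at hv
    have hk' : k ≠ Fin.last n := by rintro rfl; simp [last] at hv
    obtain ⟨j, rfl⟩ := Fin.exists_castSucc_eq.2 hk'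
    have hj : 0 < (j : ℕ) := Nat.pos_of_ne_zero fun h ↦ hk (Fin.ext h)
    exact ⟨⟨j - 1, by omega⟩, j, Nat.sub_add_cancel hj, rfl,
      .inr ⟨trivial, .inl ⟨Nat.sub_add_cancel hj, hv⟩⟩⟩

lemma assemble_subset_edgeSet (h : ∀ j, ∀ e ∈ L j, e ∈ (H j).edgeSet) :
    ∀ e ∈ assemble C L, e ∈ (layered H).edgeSet := by
  intro e he
  induction e with
  | _ p q =>
    rcases mem_assemble.1 he with ⟨hj, h'⟩ | h'
    · exact .inl ⟨hj, h _ _ h'⟩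
    · exact .inr (by tauto)

lemma assemble_crossing_layerEdges (hP : ∀ e ∈ P, e ∈ (layered H).edgeSet) :
    assemble (crossing P) (layerEdges P) = P := by
  ext e
  induction e with
  | _ p q =>
    obtain ⟨v, i⟩ := p
    obtain ⟨w, j⟩ := q
    have adj := hP s((v, i), (w, j))
    simp only [mem_assemble, mem_layerEdges, mem_crossing_castSucc]
    constructor
    · rintro (⟨h, hP⟩ | ⟨h, ⟨hij, i', hi, hP⟩ | ⟨hij, j', hj, hP⟩⟩) <;> obtain rfl := h
      · exact hP
      · obtain rfl : i' = i := by omega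
        exact hP
      · obtain rfl : j' = j := by omega
        exact Sym2.eq_swap ▸ hP
    · intro h
      rcases adj h with ⟨rfl : i = j, -⟩ | ⟨rfl : v = w, hij | hij⟩
      · exact .inl ⟨rfl, h⟩
      · exact .inr ⟨rfl, .inl ⟨hij, i, hij, h⟩⟩
      · exact .inr ⟨rfl, .inr ⟨hij, j, hij, Sym2.eq_swap ▸ h⟩⟩

lemma layerEdges_subset_edgeSet (hP : ∀ e ∈ P, e ∈ (layered H).edgeSet) (j : Fin n) :
    ∀ e ∈ layerEdges P j, e ∈ (H j).edgeSet := by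
  intro e he
  induction e with
  | _ v w => simpa [layered] using hP _ (mem_layerEdges.1 he)

lemma edgeDegree_eq_crossing_add_layerEdges (hP : ∀ e ∈ P, e ∈ (layered H).edgeSet)
    (v : V) (j : Fin n) :
    edgeDegree P (v, j) = (if v ∈ crossing P j.castSucc then 1 else 0) +
      (if v ∈ crossing P j.succ then 1 else 0) + edgeDegree (layerEdges P j) v := by
  classical
  have previous : #{q : V × Fin n | q.1 = v ∧ (q.2 : ℕ) + 1 = j ∧ s((v, j), q) ∈ P} =
      if v ∈ crossing P j.castSucc then 1 else 0 := by
    rw [card_filter_eq_ite_exists fun p q hp hq ↦ Prod.ext (hp.1.trans hq.1.symm) (by omega)]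
    refine if_congr ?_ rfl rfl
    simp [mem_crossing_castSucc, Sym2.eq_swap]
  have next : #{q : V × Fin n | q.1 = v ∧ (j : ℕ) + 1 = q.2 ∧ s((v, j), q) ∈ P} =
      if v ∈ crossing P j.succ then 1 else 0 := by
    rw [card_filter_eq_ite_exists fun p q hp hq ↦ Prod.ext (hp.1.trans hq.1.symm) (by omega)]
    refine if_congr ?_ rfl rfl
    simp [mem_crossing_succ]
  have inside : #{q : V × Fin n | q.2 = j ∧ s((v, j), q) ∈ P} =
      edgeDegree (layerEdges P j) v := by
    symm
    refine card_bij (fun w _ ↦ (w, j)) ?_ ?_ ?_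
    · simp [mem_layerEdges]
    · simp
    · simp [mem_layerEdges]
  rw [← previous, ← next, ← inside, edgeDegree]
  simp_rw [card_filter, ← sum_add_distrib]
  refine sum_congr rfl fun ⟨w, k⟩ _ ↦ ?_
  have adj := hP s((v, j), (w, k))
  simp only [layered, SimpleGraph.mem_edgeSet] at adj
  grind

lemma isPM_layered_iff (hP : ∀ e ∈ P, e ∈ (layered H).edgeSet) :
    IsPM (layered H) P ↔ ∀ j, IsLayerMatching (H j) (crossing P j.castSucc) (crossing P j.succ)
      (layerEdges P j) := by
  simp only [IsPM, IsLayerMatching, ← edgeDegree_eq_one_iff, Prod.forall,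
    edgeDegree_eq_crossing_add_layerEdges hP]
  have := layerEdges_subset_edgeSet hP
  grind

section TransferMatrixMethod

variable {R : Type*} [CommSemiring R] (H : Fin n → SimpleGraph V) (x : R)

open scoped Classical in
lemma prod_ofFn_transfer_apply (A B : Finset V) :
    (List.ofFn fun j ↦ transfer (H j) x).prod A B =
      ∑ z : (Fin (n + 1) → Finset V) × (Fin n → Finset (Sym2 V)) with
        (z.1 0 = A ∧ z.1 (Fin.last n) = B) ∧
          ∀ j, IsLayerMatching (H j) (z.1 j.castSucc) (z.1 j.succ) (z.2 j),
        x ^ ∑ j, #(z.2 j) := by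
  simp_rw [matrix_prod_ofFn_apply_eq_sum_paths, transfer, sum_filter, prod_univ_sum, prod_ite_zero,
    Fintype.piFinset_univ, prod_pow_eq_pow_sum, mem_univ, true_imp_iff, Fintype.sum_prod_type]
  refine sum_congr rfl fun C _ ↦ ?_
  simp_rw [ite_and (P := C 0 = A ∧ C (Fin.last n) = B)]
  split_ifs <;> simp

lemma sum_pow_card_layerEdges :
    ∑ P ∈ pmFinset (layered H), x ^ ∑ j, #(layerEdges P j) =
      (List.ofFn fun j ↦ transfer (H j) x).prod ∅ ∅ := by
  classical
  rw [prod_ofFn_transfer_apply]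
  refine sum_bij' (fun P _ ↦ (crossing P, layerEdges P)) (fun z _ ↦ assemble z.1 z.2)
    ?_ ?_ ?_ ?_ fun _ _ ↦ rfl
  · intro P hP
    rw [mem_pmFinset] at hP
    simpa using ⟨⟨crossing_zero, crossing_last⟩, (isPM_layered_iff hP.1).1 hP⟩
  · rintro ⟨C, L⟩ hz
    obtain ⟨⟨zero, last⟩, matching⟩ := (mem_filter_univ _).1 hz
    have edges := assemble_subset_edgeSet (C := C) fun j ↦ (matching j).1
    simpa [mem_pmFinset, isPM_layered_iff edges, layerEdges_assemble, crossing_assemble zero last]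
      using matching
  · intro P hP
    rw [mem_pmFinset] at hP
    exact assemble_crossing_layerEdges hP.1
  · rintro ⟨C, L⟩ hz
    obtain ⟨⟨zero, last⟩, -⟩ := (mem_filter_univ _).1 hz
    exact Prod.ext (crossing_assemble zero last) layerEdges_assemble

end TransferMatrixMethod

end Layered

section Grid

variable {m : ℕ}

lemma vert_eq_sum_card_layerEdges {n : ℕ} {H : Fin n → SimpleGraph (Fin m)}
    {P : Finset (Sym2 (Fin m × Fin n))} (hP : ∀ e ∈ P, e ∈ (layered H).edgeSet) :
    vert P = ∑ j, #(layerEdges P j) := by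
  classical
  rw [← card_sigma, vert]
  symm
  refine card_bij (fun z _ ↦ z.2.map (·, z.1)) ?_ ?_ ?_
  · rintro ⟨j, e⟩ he
    induction e with
    | _ v w =>
      have he : s(v, w) ∈ layerEdges P j := by simpa using he
      have adj := layerEdges_subset_edgeSet hP j _ he
      exact mem_filter.2 ⟨mem_layerEdges.1 he, _, _, rfl, SimpleGraph.Adj.ne adj⟩
  · rintro ⟨j, e⟩ _ ⟨k, f⟩ _ h
    induction e with
    | _ v w =>
    induction f with
    | _ v' w' =>
      simp only [Sym2.map_mk, Sym2.eq_iff, Prod.mk.injEq, Sigma.mk.injEq, heq_eq_eq] at h ⊢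
      grind
  · intro e he
    obtain ⟨he, ⟨v, i⟩, ⟨w, j⟩, rfl, ne⟩ := mem_filter.1 he
    rcases hP _ he with ⟨rfl : i = j, -⟩ | ⟨eq, -⟩
    · exact ⟨⟨i, s(v, w)⟩, by simpa [mem_layerEdges] using he, rfl⟩
    · exact absurd eq ne

lemma sum_pow_vert {R : Type*} [CommSemiring R] {n : ℕ} (H : Fin n → SimpleGraph (Fin m)) (x : R) :
    ∑ P ∈ pmFinset (layered H), x ^ vert P = (List.ofFn fun j ↦ transfer (H j) x).prod ∅ ∅ := by
  rw [← sum_pow_card_layerEdges]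
  refine sum_congr rfl fun P hP ↦ ?_
  rw [vert_eq_sum_card_layerEdges (mem_pmFinset.1 hP).1]

lemma grid_eq_layered (m n : ℕ) : grid m n = layered fun _ ↦ SimpleGraph.pathGraph m := by
  ext p q
  simp only [grid, layered, SimpleGraph.fromRel_adj, SimpleGraph.pathGraph_adj]
  grind

/-- The layers of the signed graph `G(m,-k)`: `k` paths between two edgeless columns. -/
def negGridLayer (m k : ℕ) : Fin (k + 2) → SimpleGraph (Fin m) :=
  Fin.cons ⊥ (Fin.snoc (fun _ : Fin k ↦ SimpleGraph.pathGraph m) ⊥)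

lemma negGridLayer_adj {k : ℕ} {j : Fin (k + 2)} {v w : Fin m} :
    (negGridLayer m k j).Adj v w ↔
      (SimpleGraph.pathGraph m).Adj v w ∧ 1 ≤ (j : ℕ) ∧ (j : ℕ) ≤ k := by
  cases j using Fin.cases with
  | zero => simp [negGridLayer]
  | succ j => cases j using Fin.lastCases <;> simp [negGridLayer]

lemma negGrid_eq_layered (m k : ℕ) : negGrid m k = layered (negGridLayer m k) := by
  ext p q
  simp only [negGrid, layered, SimpleGraph.fromRel_adj, negGridLayer_adj,
    SimpleGraph.pathGraph_adj]
  grind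

lemma T_eq_transfer_pow (m n : ℕ) :
    (T m n : ℤ) = (transfer (SimpleGraph.pathGraph m) (1 : ℤ) ^ n) ∅ ∅ := by
  have card_pmFinset : T m n = #(pmFinset (grid m n)) := by
    simp [T, ← Set.ncard_coe_finset, pmFinset]
  have h := sum_pow_vert (fun _ : Fin n ↦ SimpleGraph.pathGraph m) (1 : ℤ)
  rw [List.ofFn_const, List.prod_replicate, ← grid_eq_layered] at h
  simpa [card_pmFinset] using h

lemma Msigned_eq_transfer_zpow_neg (m k : ℕ) :
    Msigned m k = (transfer (SimpleGraph.pathGraph m) (1 : ℤ) ^ (-k : ℤ)) ∅ ∅ := by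
  rw [Msigned, negGrid_eq_layered, sum_pow_vert, transfer_zpow_neg]
  rw [List.ofFn_succ, List.ofFn_succ']
  simp [negGridLayer, transfer_bot (SimpleGraph.pathGraph m), mul_assoc]

end Grid

/-- The doubly-infinite sequence of ordinary and signed matching counts satisfies
a single constant-coefficient linear recurrence of order 2^m. -/
theorem two_sided_recurrence (m : ℕ) (hm : 1 ≤ m) (t : ℤ → ℤ)
    (hpos : ∀ n : ℤ, 1 ≤ n → t n = T m n.toNat)
    (hneg : ∀ n : ℤ, n ≤ 0 → t n = Msigned m (-n).toNat) :
    ∃ c : ℕ → ℤ, ∀ n : ℤ,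
      t (n + 2 ^ m) = ∑ j ∈ Finset.range (2 ^ m), c j * t (n + j) := by
  let M : Matrix (Finset (Fin m)) (Finset (Fin m)) ℤ := transfer (SimpleGraph.pathGraph m) 1
  have t_eq_zpow (n : ℤ) : t n = (M ^ n) ∅ ∅ := by
    rcases lt_or_ge 0 n with hn | hn
    · rw [hpos n hn, T_eq_transfer_pow, ← zpow_natCast, Int.toNat_of_nonneg hn.le]
    · rw [hneg n hn, Msigned_eq_transfer_zpow_neg, Int.toNat_of_nonneg (by omega), neg_neg]
  refine ⟨fun j ↦ -M.charpoly.coeff j, fun n ↦ ?_⟩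
  simp_rw [t_eq_zpow]
  simpa using matrix_zpow_add_card_apply (M := M) (isUnit_det_transfer _ 1) n ∅ ∅
end

section
/- Let G be a simple graph on a finite vertex type V, and let u, v, w ∈ V be distinct vertices such that the neighborhood of v in G is exactly {u, w}, u and w are not adjacent, and the only common neighbor of u and w is v. Let G' be the simple graph on the vertex set V ∖ {v, w} in which distinct vertices a, b are adjacent iff G.Adj a b, or (a = u and G.Adj w b), or (b = u and G.Adj w a). Then G and G' have the same number of perfect matchings. (The shrinking lemma: contracting a chain u–v–w through a degree-2 vertex v does not change the number of perfect matchings.) -/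
open Finset

/-- The graph obtained by shrinking the chain u–v–w: delete v and w, and make the
neighbors of w (other than v) adjacent to u. Distinct vertices a, b of V∖{v,w} are
adjacent iff `G.Adj a b`, or (a = u and `G.Adj w b`), or (b = u and `G.Adj w a`). -/
def shrink {V : Type*} (G : SimpleGraph V) (u v w : V) :
    SimpleGraph {x : V // x ≠ v ∧ x ≠ w} :=
  SimpleGraph.fromRel (fun a b => G.Adj a.1 b.1 ∨ (a.1 = u ∧ G.Adj w b.1))

/-!
Contract the chain `u–v–w` to the single vertex `u`. Since `v` is adjacent to `u` and `w` only,
and `v` is the only common neighbor of `u` and `w`, the contraction restricts to a bijection from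
the edges of `G` that do not become loops onto the edges of the shrunken graph. It remains to see
that discarding loops is a bijection from the perfect matchings of `G` onto the lifts of perfect
matchings of the shrunken graph. A perfect matching of `G` contains exactly one of the loops `uv`
and `wv`. The contraction is bijective off `{u, v}` and off `{w, v}`, so the other edges form a
lift, which covers `w` in the first case and `u` in the second. A lift covers exactly one of `u` and
`w`, so the missing loop can be recovered from it.
-/

theorem existsUnique_mem_image_iff {α β : Type*} [DecidableEq β] {g : α → β} {s : Finset α}
    {r : β → Prop} (hg : Set.InjOn g s) :
    (∃! b, b ∈ s.image g ∧ r b) ↔ ∃! a, a ∈ s ∧ r (g a) := by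
  constructor
  · rintro ⟨b, ⟨hb, hrb⟩, huniq⟩
    obtain ⟨a, ha, rfl⟩ := Finset.mem_image.1 hb
    exact ⟨a, ⟨ha, hrb⟩, fun c hc ↦
      hg hc.1 ha (huniq _ ⟨Finset.mem_image_of_mem g hc.1, hc.2⟩)⟩
  · rintro ⟨a, ⟨ha, hra⟩, huniq⟩
    refine ⟨g a, ⟨Finset.mem_image_of_mem g ha, hra⟩, ?_⟩
    rintro d ⟨hd, hrd⟩
    obtain ⟨c, hc, rfl⟩ := Finset.mem_image.1 hd
    rw [huniq c ⟨hc, hrd⟩]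

section Lift

variable {V W : Type*} {G : SimpleGraph V} {f : V → W} {Q : Finset (Sym2 V)}

/-- `Q` is a lift along the vertex map `f` of a perfect matching: the edges of `Q` are edges of `G`
that `f` does not send to loops, and every vertex of `W` lies on the image of exactly one of them.
The graph on `W` is left out, so that lifts can be compared with perfect matchings of `G` alone. -/
def IsPMLift (G : SimpleGraph V) (f : V → W) (Q : Finset (Sym2 V)) : Prop :=
  (∀ e ∈ Q, e ∈ G.edgeSet ∧ ¬ (e.map f).IsDiag) ∧ ∀ a : W, ∃! e, e ∈ Q ∧ a ∈ e.map f

theorem IsPMLift.eq_of_apply_eq {d e : Sym2 V} {x y : V} (hQ : IsPMLift G f Q) (hd : d ∈ Q)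
    (he : e ∈ Q) (hx : x ∈ d) (hy : y ∈ e) (hxy : f x = f y) : d = e :=
  (hQ.2 (f y)).unique ⟨hd, Sym2.mem_map.2 ⟨x, hx, hxy⟩⟩ ⟨he, Sym2.mem_map.2 ⟨y, hy, rfl⟩⟩

theorem IsPMLift.notMem_of_adj_imp_apply_eq {v : V} (hQ : IsPMLift G f Q)
    (hv : ∀ x, G.Adj v x → f x = f v) : ∀ e ∈ Q, v ∉ e := by
  rintro e he ⟨x, rfl⟩
  exact (hQ.1 _ he).2 (hv x (hQ.1 _ he).1).symm

theorem bijOn_image_map_isPMLift [DecidableEq W] {H : SimpleGraph W}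
    (h : Set.BijOn (Sym2.map f) {e | e ∈ G.edgeSet ∧ ¬ (e.map f).IsDiag} H.edgeSet) :
    Set.BijOn (Finset.image (Sym2.map f)) {Q | IsPMLift G f Q} {P | IsPM H P} := by
  have isPM_image_iff {Q : Finset (Sym2 V)} (hQ : ∀ e ∈ Q, e ∈ G.edgeSet ∧ ¬ (e.map f).IsDiag) :
      IsPM H (Q.image (Sym2.map f)) ↔ ∀ a : W, ∃! e, e ∈ Q ∧ a ∈ e.map f :=
    (and_iff_right (Finset.forall_mem_image.2 fun e he ↦ h.mapsTo (hQ e he))).trans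
      (forall_congr' fun _ ↦ existsUnique_mem_image_iff (h.injOn.mono hQ))
  refine ⟨fun Q hQ ↦ (isPM_image_iff hQ.1).2 hQ.2, fun Q hQ R hR hQR ↦ ?_, fun P hP ↦ ?_⟩
  · rw [← Finset.coe_inj, ← h.injOn.image_eq_image_iff hQ.1 hR.1]
    exact_mod_cast hQR
  · have hPedge : (P : Set (Sym2 W)) ⊆ Sym2.map f '' {e | e ∈ G.edgeSet ∧ ¬ (e.map f).IsDiag} :=
      h.image_eq ▸ hP.1
    obtain ⟨Q, hQ, rfl⟩ := Finset.subset_set_image_iff.1 hPedge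
    exact ⟨Q, ⟨hQ, (isPM_image_iff hQ).1 hP⟩, rfl⟩

end Lift

section Loops

variable {V W : Type*} {G : SimpleGraph V} {f : V → W} {P Q : Finset (Sym2 V)} {p q u v w : V}

theorem IsPM.eq_of_mem {d e : Sym2 V} {x : V} (hP : IsPM G P) (hd : d ∈ P) (he : e ∈ P)
    (hxd : x ∈ d) (hxe : x ∈ e) : d = e :=
  (hP.2 x).unique ⟨hd, hxd⟩ ⟨he, hxe⟩

theorem IsPM.mem_or_mem_of_neighborSet_subset (hP : IsPM G P) (hv : G.neighborSet v ⊆ {u, w}) :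
    s(u, v) ∈ P ∨ s(w, v) ∈ P := by
  obtain ⟨_, ⟨he, x, rfl⟩, -⟩ := hP.2 v
  obtain rfl | rfl := hv (hP.1 _ he)
  · exact .inl (Sym2.eq_swap ▸ he)
  · exact .inr (Sym2.eq_swap ▸ he)

theorem IsPM.mem_compl_pair_of_ne {e : Sym2 V} {x : V} (hP : IsPM G P) (hpq : s(p, q) ∈ P)
    (he : e ∈ P) (hne : e ≠ s(p, q)) (hx : x ∈ e) : x ∈ ({p, q} : Set V)ᶜ := fun hxpq ↦
  hne (hP.eq_of_mem he hpq hx (Sym2.mem_iff.2 hxpq))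

theorem IsPM.eq_of_isDiag_map {e : Sym2 V} (hP : IsPM G P) (hf : Set.InjOn f {p, q}ᶜ)
    (hpq : s(p, q) ∈ P) (he : e ∈ P) (hloop : (e.map f).IsDiag) : e = s(p, q) := by
  by_contra hne
  induction e with | _ x y
  exact (hP.1 _ he).ne <| hf (hP.mem_compl_pair_of_ne hpq he hne (Sym2.mem_mk_left x y))
    (hP.mem_compl_pair_of_ne hpq he hne (Sym2.mem_mk_right x y)) hloop

theorem IsPM.exists_mem_not_isDiag_map {x : V} (hP : IsPM G P) (hf : Set.InjOn f {p, q}ᶜ)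
    (hpq : s(p, q) ∈ P) (hx : x ∈ ({p, q} : Set V)ᶜ) :
    ∃ e ∈ P, ¬ (e.map f).IsDiag ∧ x ∈ e := by
  obtain ⟨e, ⟨he, hxe⟩, -⟩ := hP.2 x
  have hne : e ≠ s(p, q) := fun h ↦ hx (Sym2.mem_iff.1 (h ▸ hxe))
  exact ⟨e, he, mt (hP.eq_of_isDiag_map hf hpq he) hne, hxe⟩

theorem IsPM.isPMLift_filter [DecidableEq W] (hP : IsPM G P) (hf : Set.BijOn f {p, q}ᶜ Set.univ)
    (hfpq : f p = f q) (hpq : s(p, q) ∈ P) :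
    IsPMLift G f {e ∈ P | ¬ (e.map f).IsDiag} := by
  refine ⟨fun e he ↦ (Finset.mem_filter.1 he).imp_left (hP.1 e), fun a ↦ ?_⟩
  obtain ⟨x, hx, rfl⟩ := hf.surjOn (Set.mem_univ a)
  obtain ⟨e, he, hloop, hxe⟩ := hP.exists_mem_not_isDiag_map hf.injOn hpq hx
  refine ⟨e, ⟨Finset.mem_filter.2 ⟨he, hloop⟩, Sym2.mem_map.2 ⟨x, hxe, rfl⟩⟩, ?_⟩
  rintro d ⟨hd, hxd⟩
  obtain ⟨hd, hloop⟩ := Finset.mem_filter.1 hd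
  obtain ⟨y, hy, hyx⟩ := Sym2.mem_map.1 hxd
  have hne : d ≠ s(p, q) := fun h ↦ hloop (h ▸ hfpq)
  obtain rfl : y = x := hf.injOn (hP.mem_compl_pair_of_ne hpq hd hne hy) hx hyx
  exact hP.eq_of_mem hd he hy hxe

theorem IsPMLift.isPM_insert [DecidableEq V] (hQ : IsPMLift G f Q) (hf : Set.InjOn f {p, q}ᶜ)
    (hpq : G.Adj p q) (hp : ∀ e ∈ Q, p ∉ e) (hq : ∀ e ∈ Q, q ∉ e) :
    IsPM G (insert s(p, q) Q) := by
  refine ⟨Finset.forall_mem_insert _ _ _ |>.2 ⟨hpq, fun e he ↦ (hQ.1 e he).1⟩, fun x ↦ ?_⟩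
  by_cases hx : x ∈ s(p, q)
  · refine ⟨s(p, q), ⟨Finset.mem_insert_self _ _, hx⟩, ?_⟩
    rintro d ⟨hd, hxd⟩
    refine (Finset.mem_insert.1 hd).resolve_right fun hdQ ↦ ?_
    obtain rfl | rfl := Sym2.mem_iff.1 hx
    exacts [hp d hdQ hxd, hq d hdQ hxd]
  · have hx' : x ∈ ({p, q} : Set V)ᶜ := fun h ↦ hx (Sym2.mem_iff.2 h)
    obtain ⟨e, ⟨he, hxe⟩, -⟩ := hQ.2 (f x)
    obtain ⟨y, hy, hyx⟩ := Sym2.mem_map.1 hxe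
    have hy' : y ∈ ({p, q} : Set V)ᶜ := by
      rintro (rfl | rfl)
      exacts [hp e he hy, hq e he hy]
    obtain rfl : y = x := hf hy' hx' hyx
    refine ⟨e, ⟨Finset.mem_insert_of_mem he, hy⟩, ?_⟩
    rintro d ⟨hd, hyd⟩
    have hdQ : d ∈ Q := (Finset.mem_insert.1 hd).resolve_left fun h ↦ hx (h ▸ hyd)
    exact hQ.eq_of_apply_eq hdQ he hyd hy rfl

theorem IsPMLift.notMem_of_apply_eq_of_mem (hQ : IsPMLift G f Q) (hfuw : f u = f w) (huw : u ≠ w)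
    {d : Sym2 V} (hd : d ∈ Q) (hu : u ∈ d) : ∀ e ∈ Q, w ∉ e := by
  intro e he hw
  obtain rfl : d = e := hQ.eq_of_apply_eq hd he hu hw hfuw
  obtain rfl : d = s(u, w) := (Sym2.mem_and_mem_iff huw).1 ⟨hu, hw⟩
  exact (hQ.1 _ hd).2 hfuw

/-- The map `f` contracts the chain `u–v–w` to one vertex and is bijective otherwise. The latter is
expressed by deleting either pair of consecutive vertices of the chain, in which form it applies
directly to a matching that contains the corresponding edge. -/
structure ContractsChain (f : V → W) (u v w : V) : Prop where
  ne : u ≠ w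
  apply_left : f u = f v
  apply_right : f w = f v
  bijOn_left : Set.BijOn f {u, v}ᶜ Set.univ
  bijOn_right : Set.BijOn f {w, v}ᶜ Set.univ

theorem ContractsChain.symm (h : ContractsChain f u v w) : ContractsChain f w v u :=
  ⟨h.ne.symm, h.apply_right, h.apply_left, h.bijOn_right, h.bijOn_left⟩

theorem ContractsChain.mem_of_filter_subset [DecidableEq W] (h : ContractsChain f u v w)
    (hv : G.neighborSet v ⊆ {u, w}) (hP : IsPM G P) (hQ : IsPM G Q)
    (hPQ : {e ∈ P | ¬ (e.map f).IsDiag} ⊆ Q) (huv : s(u, v) ∈ P) : s(u, v) ∈ Q := by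
  refine (hQ.mem_or_mem_of_neighborSet_subset hv).resolve_right fun hwv ↦ ?_
  have hw : w ∈ ({u, v} : Set V)ᶜ := by
    rintro (rfl | rfl)
    exacts [h.ne rfl, (hQ.1 _ hwv).ne rfl]
  obtain ⟨e, he, hloop, hwe⟩ := hP.exists_mem_not_isDiag_map h.bijOn_left.injOn huv hw
  have heQ : e ∈ Q := hPQ (Finset.mem_filter.2 ⟨he, hloop⟩)
  obtain rfl : e = s(w, v) := hQ.eq_of_mem heQ hwv hwe (Sym2.mem_mk_left w v)
  exact hloop h.apply_right

theorem ContractsChain.subset_of_filter_subset [DecidableEq W] (h : ContractsChain f u v w)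
    (hv : G.neighborSet v ⊆ {u, w}) (hP : IsPM G P) (hQ : IsPM G Q)
    (hPQ : {e ∈ P | ¬ (e.map f).IsDiag} ⊆ Q) : P ⊆ Q := by
  intro e he
  by_cases hloop : (e.map f).IsDiag
  · obtain huv | hwv := hP.mem_or_mem_of_neighborSet_subset hv
    · rw [hP.eq_of_isDiag_map h.bijOn_left.injOn huv he hloop]
      exact h.mem_of_filter_subset hv hP hQ hPQ huv
    · rw [hP.eq_of_isDiag_map h.bijOn_right.injOn hwv he hloop]
      exact h.symm.mem_of_filter_subset (Set.pair_comm u w ▸ hv) hP hQ hPQ hwv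
  · exact hPQ (Finset.mem_filter.2 ⟨he, hloop⟩)

theorem IsPMLift.exists_isPM_filter_eq [DecidableEq W] (hQ : IsPMLift G f Q)
    (hf : Set.InjOn f {p, q}ᶜ) (hfpq : f p = f q) (hpq : G.Adj p q) (hp : ∀ e ∈ Q, p ∉ e)
    (hq : ∀ e ∈ Q, q ∉ e) : ∃ P, IsPM G P ∧ ({e ∈ P | ¬ (e.map f).IsDiag} : Finset _) = Q := by
  classical
  refine ⟨insert s(p, q) Q, hQ.isPM_insert hf hpq hp hq, ?_⟩
  have hloop : (Sym2.map f s(p, q)).IsDiag := hfpq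
  rw [Finset.filter_insert, if_neg (not_not.2 hloop), Finset.filter_true_of_mem]
  exact fun e he ↦ (hQ.1 e he).2

theorem ContractsChain.bijOn_filter_isPMLift [DecidableEq W] (h : ContractsChain f u v w)
    (hv : G.neighborSet v = {u, w}) :
    Set.BijOn (Finset.filter fun e ↦ ¬ (Sym2.map f e).IsDiag)
      {P | IsPM G P} {Q | IsPMLift G f Q} := by
  refine ⟨fun P hP ↦ ?_, fun P hP Q hQ hPQ ↦ ?_, fun Q hQ ↦ ?_⟩
  · obtain huv | hwv := IsPM.mem_or_mem_of_neighborSet_subset hP hv.subset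
    · exact IsPM.isPMLift_filter hP h.bijOn_left h.apply_left huv
    · exact IsPM.isPMLift_filter hP h.bijOn_right h.apply_right hwv
  · have hsub : P ⊆ Q := h.subset_of_filter_subset hv.subset hP hQ
      (hPQ.subset.trans (Finset.filter_subset _ _))
    have hsup : Q ⊆ P := h.subset_of_filter_subset hv.subset hQ hP
      (hPQ.superset.trans (Finset.filter_subset _ _))
    exact hsub.antisymm hsup
  · have hvu : G.Adj v u := hv.superset (Set.mem_insert u {w})
    have hvw : G.Adj v w := hv.superset (Set.mem_insert_of_mem u rfl)
    have hvQ : ∀ e ∈ Q, v ∉ e := IsPMLift.notMem_of_adj_imp_apply_eq hQ fun x hx ↦ by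
      obtain rfl | rfl := hv.subset hx
      exacts [h.apply_left, h.apply_right]
    by_cases huQ : ∀ e ∈ Q, u ∉ e
    · exact IsPMLift.exists_isPM_filter_eq hQ h.bijOn_left.injOn h.apply_left hvu.symm huQ hvQ
    · push Not at huQ
      obtain ⟨d, hd, hud⟩ := huQ
      have hwQ : ∀ e ∈ Q, w ∉ e :=
        IsPMLift.notMem_of_apply_eq_of_mem hQ (h.apply_left.trans h.apply_right.symm) h.ne hd hud
      exact IsPMLift.exists_isPM_filter_eq hQ h.bijOn_right.injOn h.apply_right hvw.symm hwQ hvQ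

end Loops

section Contract

variable {V : Type*} [DecidableEq V] {G : SimpleGraph V} {u v w : V} (huv : u ≠ v) (huw : u ≠ w)

/-- The contraction of the chain `u–v–w` to the vertex `u`, as a map onto the vertices of
`shrink G u v w`. -/
def contract (x : V) : {x : V // x ≠ v ∧ x ≠ w} :=
  if hx : x ≠ v ∧ x ≠ w then ⟨x, hx⟩ else ⟨u, huv, huw⟩

theorem contract_coe (a : {x : V // x ≠ v ∧ x ≠ w}) : contract huv huw a = a :=
  dif_pos a.2

theorem coe_contract (x : V) : (contract huv huw x : V) = if x = v ∨ x = w then u else x := by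
  unfold contract
  grind

theorem contract_right {a : {x : V // x ≠ v ∧ x ≠ w}} (ha : a.1 = u) : contract huv huw w = a := by
  simp [Subtype.ext_iff, coe_contract, ha]

theorem contractsChain_contract (hvw : v ≠ w) : ContractsChain (contract huv huw) u v w where
  ne := huw
  apply_left := by simp [Subtype.ext_iff, coe_contract]
  apply_right := by simp [Subtype.ext_iff, coe_contract]
  bijOn_left := by
    refine ⟨Set.mapsTo_univ _ _, fun x hx y hy hxy ↦ ?_, fun a _ ↦ ?_⟩
    · grind [coe_contract]
    · by_cases ha : a.1 = u
      · exact ⟨w, by grind, contract_right huv huw ha⟩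
      · exact ⟨a, by grind, contract_coe huv huw a⟩
  bijOn_right := by
    refine ⟨Set.mapsTo_univ _ _, fun x hx y hy hxy ↦ ?_, fun a _ ↦ ?_⟩
    · grind [coe_contract]
    · exact ⟨a, by grind, contract_coe huv huw a⟩

theorem ne_of_adj_of_contract_ne {x y : V} (hv : G.neighborSet v ⊆ {u, w}) (hxy : G.Adj x y)
    (hne : contract huv huw x ≠ contract huv huw y) : x ≠ v := by
  rintro rfl
  obtain rfl | rfl := hv hxy <;> simp [Subtype.ext_iff, coe_contract] at hne

theorem shrink_adj_iff {a b : {x : V // x ≠ v ∧ x ≠ w}} (hv : G.neighborSet v ⊆ {u, w}) :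
    (shrink G u v w).Adj a b ↔
      a ≠ b ∧ ∃ x y, G.Adj x y ∧ contract huv huw x = a ∧ contract huv huw y = b := by
  rw [shrink, SimpleGraph.fromRel_adj]
  refine and_congr_right fun hne ↦ ⟨?_, ?_⟩
  · rintro ((hab | ⟨ha, hwb⟩) | hba | ⟨hb, hwa⟩)
    · exact ⟨a, b, hab, contract_coe huv huw a, contract_coe huv huw b⟩
    · exact ⟨w, b, hwb, contract_right huv huw ha, contract_coe huv huw b⟩
    · exact ⟨a, b, hba.symm, contract_coe huv huw a, contract_coe huv huw b⟩
    · exact ⟨a, w, hwa.symm, contract_coe huv huw a, contract_right huv huw hb⟩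
  · rintro ⟨x, y, hxy, rfl, rfl⟩
    have hxv : x ≠ v := ne_of_adj_of_contract_ne huv huw hv hxy hne
    have hyv : y ≠ v := ne_of_adj_of_contract_ne huv huw hv hxy.symm hne.symm
    simp only [coe_contract, hxv, hyv, false_or]
    split_ifs with hxw hyw hyw
    · exact (hne (congrArg _ (hxw.trans hyw.symm))).elim
    · exact .inl (.inr ⟨rfl, hxw ▸ hxy⟩)
    · exact .inr (.inr ⟨rfl, hyw ▸ hxy.symm⟩)
    · exact .inl (.inl hxy)

theorem eq_or_mem_pair_of_contract_eq {x y : V} (hx : x ≠ v) (hy : y ≠ v)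
    (h : contract huv huw x = contract huv huw y) : x = y ∨ x = u ∧ y = w ∨ x = w ∧ y = u := by
  grind [coe_contract]

theorem left_eq_of_adj_of_contract_eq {x y x' y' : V} (hv : G.neighborSet v ⊆ {u, w})
    (hcommon : G.neighborSet u ∩ G.neighborSet w ⊆ {v}) (hxy : G.Adj x y) (hxy' : G.Adj x' y')
    (hx : contract huv huw x = contract huv huw x') (hy : contract huv huw y = contract huv huw y')
    (hne : contract huv huw x ≠ contract huv huw y) : x = x' := by
  have hne' : contract huv huw x' ≠ contract huv huw y' := hx ▸ hy ▸ hne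
  have hxv : x ≠ v := ne_of_adj_of_contract_ne huv huw hv hxy hne
  have hyv : y ≠ v := ne_of_adj_of_contract_ne huv huw hv hxy.symm hne.symm
  have hxv' : x' ≠ v := ne_of_adj_of_contract_ne huv huw hv hxy' hne'
  have hyv' : y' ≠ v := ne_of_adj_of_contract_ne huv huw hv hxy'.symm hne'.symm
  obtain hxx' | hends := eq_or_mem_pair_of_contract_eq huv huw hxv hxv' hx
  · exact hxx'
  · have hyy' : y = y' := by
      grind [eq_or_mem_pair_of_contract_eq huv huw hyv hyv' hy]
    have hycommon : y ∈ G.neighborSet u ∩ G.neighborSet w := by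
      subst hyy'
      obtain ⟨rfl, rfl⟩ | ⟨rfl, rfl⟩ := hends
      exacts [⟨hxy, hxy'⟩, ⟨hxy', hxy⟩]
    exact (hyv (hcommon hycommon)).elim

theorem bijOn_map_contract_edgeSet (hv : G.neighborSet v ⊆ {u, w})
    (hcommon : G.neighborSet u ∩ G.neighborSet w ⊆ {v}) :
    Set.BijOn (Sym2.map (contract huv huw))
      {e | e ∈ G.edgeSet ∧ ¬ (e.map (contract huv huw)).IsDiag} (shrink G u v w).edgeSet := by
  refine ⟨?_, ?_, ?_⟩
  · rintro ⟨x, y⟩ ⟨hxy, hne⟩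
    exact (shrink_adj_iff huv huw hv).2 ⟨hne, x, y, hxy, rfl, rfl⟩
  · rintro ⟨x, y⟩ ⟨hxy, hne⟩ ⟨x', y'⟩ ⟨hxy', -⟩ heq
    have eq_of_contract_eq {p q : V} (hpq : G.Adj p q)
        (hx : contract huv huw x = contract huv huw p)
        (hy : contract huv huw y = contract huv huw q) : x = p ∧ y = q :=
      ⟨left_eq_of_adj_of_contract_eq huv huw hv hcommon hxy hpq hx hy hne,
        left_eq_of_adj_of_contract_eq huv huw hv hcommon hxy.symm hpq.symm hy hx (Ne.symm hne)⟩
    exact Sym2.eq_iff.2 <| (Sym2.eq_iff.1 heq).imp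
      (fun h ↦ eq_of_contract_eq hxy' h.1 h.2) (fun h ↦ eq_of_contract_eq hxy'.symm h.1 h.2)
  · rintro ⟨a, b⟩ hab
    obtain ⟨hne, x, y, hxy, rfl, rfl⟩ := (shrink_adj_iff huv huw hv).1 hab
    exact ⟨s(x, y), ⟨hxy, hne⟩, rfl⟩

end Contract

theorem shrinking_lemma_general {V : Type*} (G : SimpleGraph V) (u v w : V) (huw : u ≠ w)
    (hnbhd : G.neighborSet v = {u, w}) (hcommon : G.neighborSet u ∩ G.neighborSet w = {v}) :
    {P : Finset (Sym2 V) | IsPM G P}.ncard =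
      {P : Finset (Sym2 {x : V // x ≠ v ∧ x ≠ w}) | IsPM (shrink G u v w) P}.ncard := by
  classical
  have hvu : G.Adj v u := hnbhd.superset (Set.mem_insert u {w})
  have hvw : G.Adj v w := hnbhd.superset (Set.mem_insert_of_mem u rfl)
  have discard_loops := (contractsChain_contract hvu.ne' huw hvw.ne).bijOn_filter_isPMLift hnbhd
  have contract_edges := bijOn_image_map_isPMLift
    (bijOn_map_contract_edgeSet hvu.ne' huw hnbhd.subset hcommon.subset)
  exact (contract_edges.comp discard_loops).ncard_eq

/-- The shrinking lemma: contracting a chain u–v–w through a degree-2 vertex v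
does not change the number of perfect matchings. -/
theorem shrinking_lemma {V : Type*} [Fintype V] [DecidableEq V]
    (G : SimpleGraph V) (u v w : V)
    (huv : u ≠ v) (huw : u ≠ w) (hvw : v ≠ w)
    (hnbhd : G.neighborSet v = {u, w})
    (hnadj : ¬ G.Adj u w)
    (hcommon : G.neighborSet u ∩ G.neighborSet w = {v}) :
    {P : Finset (Sym2 V) | IsPM G P}.ncard =
      {P : Finset (Sym2 {x : V // x ≠ v ∧ x ≠ w}) | IsPM (shrink G u v w) P}.ncard := by
  exact shrinking_lemma_general G u v w huw hnbhd hcommon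
end
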